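/- The map A ↦ (X ↦ A X A*) is a surjective group homomorphism from Sp(3) onto F_{4,ℍ} with kernel {E, −E}; consequently F_{4,ℍ} is isomorphic to Sp(3)/{E, −E}. -/

import Mathlib

/-!
Statement 3: The map A ↦ (X ↦ A X A*) is a surjective group homomorphism from Sp(3)
onto F_{4,ℍ} with kernel {E, −E}; consequently F_{4,ℍ} ≅ Sp(3)/{E, −E}.

Here J_ℍ is the real Jordan algebra of 3×3 ℍ-Hermitian matrices with X ∘ Y = ½(XY+YX),
F_{4,ℍ} its group of ℝ-linear Jordan automorphisms, and Sp(3) the quaternionic unitary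
group {A ∈ M(3,ℍ) | A A* = E}.
-/

noncomputable section

open Matrix

abbrev HR : Type := Quaternion ℝ

lemma star_rsmul (r : ℝ) (q : HR) : star (r • q) = r • star q :=
  QuaternionAlgebra.star_smul r q

lemma conjTranspose_rsmul (r : ℝ) (M : Matrix (Fin 3) (Fin 3) HR) :
    (r • M)ᴴ = r • Mᴴ :=
  Matrix.ext fun i j => by simp [conjTranspose_apply, star_rsmul]

/-- The Jordan algebra J_ℍ of 3×3 ℍ-Hermitian matrices, as an ℝ-submodule of the
3×3 matrices over ℍ. -/
def JH : Submodule ℝ (Matrix (Fin 3) (Fin 3) HR) where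
  carrier := {X | Xᴴ = X}
  add_mem' := fun {X Y} hX hY => by
    simp only [Set.mem_setOf_eq] at *
    rw [conjTranspose_add, hX, hY]
  zero_mem' := by simp [Set.mem_setOf_eq]
  smul_mem' := fun r X hX => by
    simp only [Set.mem_setOf_eq] at *
    rw [conjTranspose_rsmul, hX]

lemma mem_JH {X : Matrix (Fin 3) (Fin 3) HR} : X ∈ JH ↔ Xᴴ = X := Iff.rfl

/-- the Jordan multiplication X ∘ Y = ½(XY + YX). -/
def jmulR (X Y : JH) : JH :=
  ⟨(2⁻¹ : ℝ) • ((X : Matrix (Fin 3) (Fin 3) HR) * (Y : Matrix (Fin 3) (Fin 3) HR)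
      + (Y : Matrix (Fin 3) (Fin 3) HR) * (X : Matrix (Fin 3) (Fin 3) HR)), by
    have hX : ((X : Matrix (Fin 3) (Fin 3) HR))ᴴ = X := X.2
    have hY : ((Y : Matrix (Fin 3) (Fin 3) HR))ᴴ = Y := Y.2
    rw [mem_JH, conjTranspose_rsmul, conjTranspose_add, conjTranspose_mul,
      conjTranspose_mul, hX, hY, add_comm]⟩

/-- The group F_{4,ℍ} of ℝ-linear Jordan automorphisms of J_ℍ. -/
def F4H : Subgroup (JH ≃ₗ[ℝ] JH) where
  carrier := {α | ∀ X Y, α (jmulR X Y) = jmulR (α X) (α Y)}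
  one_mem' := fun _ _ => rfl
  mul_mem' := fun {a b} ha hb X Y => by
    have h1 : ∀ Z, (a * b) Z = a (b Z) := fun _ => rfl
    rw [h1, h1, h1, hb X Y, ha (b X) (b Y)]
  inv_mem' := fun {a} ha X Y => by
    have h1 : ∀ Z, (a⁻¹ : JH ≃ₗ[ℝ] JH) Z = a.symm Z := fun _ => rfl
    rw [h1, h1, h1]
    have h := ha (a.symm X) (a.symm Y)
    rw [a.apply_symm_apply, a.apply_symm_apply] at h
    rw [← h, a.symm_apply_apply]

/-!
A Jordan automorphism `α` sends the diagonal idempotents `Eᵢ` to nonzero pairwise orthogonal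
Hermitian idempotents. Unit vectors in the images of these form the columns of a unitary `U`, and
`α` followed by conjugation by `U⁻¹` is an automorphism `β` fixing every `Eᵢ`. Such a `β` preserves
the Peirce spaces, so it acts on the `(i, j)` entry by a real linear map `f i j`, and the Jordan
product forces `f i k (p q) = f i j p * f j k q`. As there are at least three indices, this yields
`f i j q = uᵢ* g(q) uⱼ` with `uᵢ` unitary and `g` an algebra endomorphism of `ℍ`. By Skolem–Noether
`g` is conjugation by a unit quaternion `a`, whence `β` is conjugation by the diagonal matrix with
entries `uᵢ* a`.

A unitary matrix in the kernel commutes with all Hermitian matrices. These generate the full matrix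
algebra, whose center consists of the real scalars.
-/

open scoped Quaternion
open QuaternionAlgebra (Basis)

/-! ### Endomorphisms of the quaternions -/

section Quaternions

variable {R A : Type*} [CommRing R] [Ring A] [Algebra R A]

lemma quaternionBasis_lift_mul_eq {c₁ c₂ c₃ : R} {p q : Basis A c₁ c₂ c₃} {t : A}
    (hi : p.i * t = t * q.i) (hj : p.j * t = t * q.j) (z : ℍ[R,c₁,c₂,c₃]) :
    p.lift z * t = t * q.lift z := by
  have hk : p.k * t = t * q.k := by
    rw [← p.i_mul_j, ← q.i_mul_j, mul_assoc, hj, ← mul_assoc, hi, mul_assoc]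
  simp only [Basis.lift, add_mul, mul_add, smul_mul_assoc, mul_smul_comm, hi, hj, hk,
    Algebra.commutes]

/-- The unnormalised average `∑ p(e) * x * q(e)⁻¹` over `e ∈ {1, i, j, k}`, where `p`
and `q` are two representations of the quaternions in `A`; it turns any `x` into an intertwiner of
`p` and `q`. -/
def quaternionAverage (p q : Basis A (-1 : R) 0 (-1)) (x : A) : A :=
  x - p.i * x * q.i - p.j * x * q.j - p.k * x * q.k

variable (p q : Basis A (-1 : R) 0 (-1)) (x : A)

lemma i_mul_quaternionAverage :
    p.i * quaternionAverage p q x = quaternionAverage p q x * q.i := by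
  calc p.i * quaternionAverage p q x
      = p.i * x - p.i * p.i * x * q.i - p.i * p.j * x * q.j - p.i * p.k * x * q.k := by
        simp only [quaternionAverage, mul_sub, mul_assoc]
    _ = x * q.i - p.i * x * (q.i * q.i) - p.j * x * (q.j * q.i) - p.k * x * (q.k * q.i) := by
        simp only [p.i_mul_i, p.i_mul_j, p.i_mul_k, q.j_mul_i, q.k_mul_i, q.i_mul_i, neg_smul,
          one_smul, zero_smul, add_zero, zero_sub, neg_neg, neg_mul, mul_neg, one_mul, mul_one]
        abel
    _ = quaternionAverage p q x * q.i := by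
        simp only [quaternionAverage, sub_mul, mul_assoc]

lemma j_mul_quaternionAverage :
    p.j * quaternionAverage p q x = quaternionAverage p q x * q.j := by
  calc p.j * quaternionAverage p q x
      = p.j * x - p.j * p.i * x * q.i - p.j * p.j * x * q.j - p.j * p.k * x * q.k := by
        simp only [quaternionAverage, mul_sub, mul_assoc]
    _ = x * q.j - p.i * x * (q.i * q.j) - p.j * x * (q.j * q.j) - p.k * x * (q.k * q.j) := by
        simp only [p.j_mul_i, p.j_mul_j, p.j_mul_k, q.i_mul_j, q.k_mul_j, q.j_mul_j, neg_smul,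
          one_smul, zero_smul, zero_sub, neg_zero, neg_mul, mul_neg, one_mul, mul_one]
        abel
    _ = quaternionAverage p q x * q.j := by
        simp only [quaternionAverage, sub_mul, mul_assoc]

lemma quaternionAverage_sub_sub_sub_eq_four :
    quaternionAverage p q 1 - quaternionAverage p q q.i * q.i
      - quaternionAverage p q q.j * q.j - quaternionAverage p q q.k * q.k = 4 := by
  have four : (4 : A) = 1 + 1 + 1 + 1 := by norm_num
  simp only [quaternionAverage, sub_mul, mul_assoc, four, q.i_mul_i, q.i_mul_j, q.i_mul_k,
    q.j_mul_i, q.j_mul_j, q.j_mul_k, q.k_mul_i, q.k_mul_j, q.k_mul_k, neg_smul, one_smul,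
    zero_smul, add_zero, zero_sub, neg_zero, neg_neg, neg_mul, mul_neg, mul_one]
  abel

lemma exists_ne_zero_quaternionBasis_lift_mul_eq [CharZero A] :
    ∃ t : A, t ≠ 0 ∧ ∀ z, p.lift z * t = t * q.lift z := by
  suffices ∃ x, quaternionAverage p q x ≠ 0 by
    obtain ⟨x, hx⟩ := this
    exact ⟨_, hx, quaternionBasis_lift_mul_eq (i_mul_quaternionAverage p q x)
      (j_mul_quaternionAverage p q x)⟩
  by_contra! h
  have hfour := quaternionAverage_sub_sub_sub_eq_four p q
  exact OfNat.ofNat_ne_zero (R := A) 4 (by simpa [h] using hfour.symm)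

lemma isCentral_quaternionAlgebra [IsAddTorsionFree R] : Algebra.IsCentral R ℍ[R,-1,0,-1] where
  out := fun q hq => by
    rw [Subalgebra.mem_center_iff] at hq
    have hi := hq (Basis.self R).i
    have hj := hq (Basis.self R).j
    have hI : q.imI = 0 := neg_eq_self.1 (by simpa using congrArg (·.imK) hj)
    have hJ : q.imJ = 0 := self_eq_neg.1 (by simpa using congrArg (·.imK) hi)
    have hK : q.imK = 0 := neg_eq_self.1 (by simpa using congrArg (·.imJ) hi)
    exact Algebra.mem_bot.2 ⟨q.re, by ext <;> simp [hI, hJ, hK]⟩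

end Quaternions

instance : Algebra.IsCentral ℝ HR := isCentral_quaternionAlgebra

instance : StarModule ℝ HR := ⟨star_rsmul⟩

lemma star_dotProduct_self_eq_sum_normSq {m : Type*} [Fintype m] (v : m → HR) :
    star v ⬝ᵥ v = ((∑ k, Quaternion.normSq (v k) : ℝ) : HR) := by
  simp only [dotProduct, Pi.star_apply, Quaternion.star_mul_self]
  exact (map_sum (algebraMap ℝ HR) _ _).symm

lemma exists_smul_star_dotProduct_self_eq_one {m : Type*} [Fintype m] {v : m → HR} (hv : v ≠ 0) :
    ∃ r : ℝ, star (r • v) ⬝ᵥ (r • v) = 1 := by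
  obtain ⟨k, hk⟩ := Function.ne_iff.1 hv
  set s := ∑ k, Quaternion.normSq (v k) with hs
  have hpos : 0 < s := Finset.sum_pos' (fun _ _ => Quaternion.normSq_nonneg)
    ⟨k, Finset.mem_univ k, Quaternion.normSq_nonneg.lt_of_ne' (Quaternion.normSq_ne_zero.2 hk)⟩
  refine ⟨(√s)⁻¹, ?_⟩
  simp only [star_dotProduct_self_eq_sum_normSq, Pi.smul_apply, Quaternion.normSq_smul,
    ← Finset.mul_sum, ← hs, inv_pow, Real.sq_sqrt hpos.le, inv_mul_cancel₀ hpos.ne']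
  simp

lemma exists_unitary_conj_eq_of_algHom (f : HR →ₐ[ℝ] HR) :
    ∃ a : unitary HR, ∀ z, f z = a * z * star (a : HR) := by
  have : CharZero HR := Algebra.charZero_of_charZero ℝ HR
  obtain ⟨t, ht, hft⟩ := exists_ne_zero_quaternionBasis_lift_mul_eq (A := HR)
    ((Basis.self ℝ).compHom f) (Basis.self ℝ)
  replace hft (z : HR) : f z * t = t * z := by
    have hf : ((Basis.self ℝ).compHom f).lift z = f z :=
      DFunLike.congr_fun (QuaternionAlgebra.lift.apply_symm_apply f) z
    have hid : (Basis.self ℝ).lift z = z :=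
      DFunLike.congr_fun (QuaternionAlgebra.lift.apply_symm_apply (AlgHom.id ℝ HR)) z
    rw [← hf]
    exact (hft z).trans (congrArg (t * ·) hid)
  obtain ⟨r, hr⟩ := exists_smul_star_dotProduct_self_eq_one (v := fun _ : Unit => t)
    (fun h => ht (congrFun h ()))
  have hrt : star (r • t) * (r • t) = 1 := by simpa [dotProduct] using hr
  have hrt' : (r • t) * star (r • t) = 1 := mul_eq_one_comm.1 hrt
  refine ⟨⟨r • t, Unitary.mem_iff.2 ⟨hrt, hrt'⟩⟩, fun z => ?_⟩
  rw [smul_mul_assoc, ← hft, ← mul_smul_comm, mul_assoc, hrt', mul_one]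

/-! ### Automorphisms of Jordan algebras of self-adjoint elements -/

section JordanAutomorphisms

variable (A : Type*) [Ring A] [StarRing A] [Algebra ℝ A] [StarModule ℝ A]

/-- The Jordan algebra of self-adjoint elements of the real `*`-algebra `A`. -/
abbrev Herm : Submodule ℝ A := selfAdjoint.submodule ℝ A

variable {A}

/-- The Jordan product `½ (x y + y x)` of self-adjoint elements. -/
def jordanMul (x y : Herm A) : Herm A :=
  ⟨(2⁻¹ : ℝ) • ((x : A) * y + y * x), by
    have hx : star (x : A) = x := x.2
    have hy : star (y : A) = y := y.2
    change star _ = _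
    rw [star_smul, star_add, star_mul, star_mul, hx, hy, star_trivial, add_comm]⟩

variable (A) in
/-- The group of `ℝ`-linear automorphisms of the Jordan algebra of self-adjoint elements of `A`. -/
def jordanAut : Subgroup (Herm A ≃ₗ[ℝ] Herm A) where
  carrier := {α | ∀ x y, α (jordanMul x y) = jordanMul (α x) (α y)}
  one_mem' _ _ := rfl
  mul_mem' {α β} hα hβ x y := by simp only [LinearEquiv.mul_apply, hβ x y, hα (β x) (β y)]
  inv_mem' {α} hα x y := α.injective <| by
    rw [hα]
    exact (α.apply_symm_apply _).trans
      (congrArg₂ jordanMul (α.apply_symm_apply x) (α.apply_symm_apply y)).symm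

namespace jordanAut

variable {α : Herm A ≃ₗ[ℝ] Herm A} (hα : α ∈ jordanAut A)
include hα

lemma map_anticommutator {x y z : Herm A} (h : (x : A) * y + y * x = z) :
    (α x : A) * α y + α y * α x = α z := by
  have hxy : jordanMul x y = (2⁻¹ : ℝ) • z := Subtype.ext (congrArg ((2⁻¹ : ℝ) • ·) h)
  have hmap := congrArg Subtype.val (hα x y)
  rw [hxy, map_smul] at hmap
  exact (smul_right_injective A (inv_ne_zero two_ne_zero : (2⁻¹ : ℝ) ≠ 0) hmap).symm

lemma map_mul_self {x z : Herm A} (h : (x : A) * x = z) : (α x : A) * α x = α z := by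
  have hmap := map_anticommutator hα (z := (2 : ℝ) • z) (by rw [h, ← two_smul ℝ]; rfl)
  rw [← two_smul ℝ, map_smul] at hmap
  exact smul_right_injective A (two_ne_zero : (2 : ℝ) ≠ 0) hmap

lemma isIdempotentElem_map {x : Herm A} (h : IsIdempotentElem (x : A)) :
    IsIdempotentElem (α x : A) :=
  map_mul_self hα h

lemma map_mul_map_eq_zero {x y : Herm A} (hx : IsIdempotentElem (x : A)) (hxy : (x : A) * y = 0)
    (hyx : (y : A) * x = 0) : (α x : A) * α y = 0 := by
  have : IsAddTorsionFree A := .of_isTorsionFree ℝ A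
  have hmap := map_anticommutator hα (z := 0) (by rw [hxy, hyx, add_zero]; rfl)
  rw [map_zero] at hmap
  exact (isIdempotentElem_map hα hx).mul_eq_zero_of_anticommute hmap

end jordanAut

/-- The restriction of `*`-automorphisms of `A` to the self-adjoint elements. -/
def starAlgEquivRestrict : (A ≃⋆ₐ[ℝ] A) →* jordanAut A where
  toFun e :=
    ⟨{ toFun := fun x => ⟨e x, IsSelfAdjoint.map x.2 e⟩
       invFun := fun x => ⟨e.symm x, IsSelfAdjoint.map x.2 e.symm⟩
       map_add' := fun x y => Subtype.ext (map_add e _ _)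
       map_smul' := fun r x => Subtype.ext (map_smul e r _)
       left_inv := fun x => Subtype.ext (e.symm_apply_apply _)
       right_inv := fun x => Subtype.ext (e.apply_symm_apply _) },
      fun x y => Subtype.ext <| by
        change e ((2⁻¹ : ℝ) • ((x : A) * y + y * x)) = (2⁻¹ : ℝ) • (e x * e y + e y * e x)
        rw [map_smul, map_add, map_mul, map_mul]⟩
  map_one' := rfl
  map_mul' _ _ := rfl

/-- The action `x ↦ U x U*` of the unitary group by automorphisms of the Jordan algebra of
self-adjoint elements. -/
def unitaryConj : unitary A →* jordanAut A :=
  starAlgEquivRestrict.comp (Unitary.conjStarAlgAut ℝ A)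

lemma unitaryConj_apply (U : unitary A) (x : Herm A) :
    ((unitaryConj U : Herm A ≃ₗ[ℝ] Herm A) x : A) = U * x * star (U : A) :=
  rfl

lemma mem_ker_unitaryConj_iff {U : unitary A} :
    U ∈ (unitaryConj (A := A)).ker ↔ ∀ x : Herm A, Commute (U : A) x := by
  have hU : star (U : A) * U = 1 := Unitary.coe_star_mul_self U
  have hU' : (U : A) * star (U : A) = 1 := Unitary.coe_mul_star_self U
  rw [MonoidHom.mem_ker]
  constructor
  · intro h x
    have hfix : (U : A) * x * star (U : A) = x := by
      rw [← unitaryConj_apply, h]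
      rfl
    calc (U : A) * x = U * x * (star (U : A) * U) := by rw [hU, mul_one]
      _ = x * U := by rw [← mul_assoc, hfix]
  · refine fun h => Subtype.ext (LinearEquiv.ext fun x => Subtype.ext ?_)
    rw [unitaryConj_apply, (h x).eq, mul_assoc, hU', mul_one]
    rfl

lemma eq_one_or_eq_neg_one_of_mem_center [Algebra.IsCentral ℝ A] {U : unitary A}
    (hU : ∀ x : A, Commute (U : A) x) : (U : A) = 1 ∨ (U : A) = -1 := by
  obtain ⟨r, hr⟩ := Algebra.mem_bot.1
    (Algebra.IsCentral.out (K := ℝ) (Subalgebra.mem_center_iff.2 fun x => (hU x).symm.eq))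
  rcases subsingleton_or_nontrivial A with _ | _
  · exact .inl (Subsingleton.elim _ _)
  have hrr : r * r = 1 := (algebraMap ℝ A).injective <| by
    rw [map_mul, map_one, ← Unitary.coe_star_mul_self U, ← hr, ← algebraMap_star_comm, star_trivial]
  refine (mul_self_eq_one_iff.1 hrr).imp ?_ ?_ <;> rintro rfl <;> simp [← hr]

end JordanAutomorphisms

/-! ### The Peirce decomposition of Hermitian matrices -/

section HermitianMatrices

variable {n D : Type*} [Fintype n] [DecidableEq n] [Ring D] [StarRing D]

/-- The unitary diagonal matrix with the given unitary entries. -/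
def diagonalUnitary (d : n → unitary D) : unitary (Matrix n n D) :=
  ⟨diagonal fun i => d i, by
    simp [Unitary.mem_iff, star_eq_conjTranspose, diagonal_conjTranspose]⟩

lemma diagonalUnitary_mul_single_mul_star (d : n → unitary D) (i j : n) (q : D) :
    (diagonalUnitary d : Matrix n n D) * single i j q * star (diagonalUnitary d : Matrix n n D)
      = single i j ((d i : D) * q * star (d j : D)) := by
  ext k l
  change (diagonal (fun i => (d i : D)) * single i j q * (diagonal fun i => (d i : D))ᴴ) k l = _
  rw [diagonal_conjTranspose, mul_diagonal, diagonal_mul, single_apply, single_apply]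
  split_ifs with h
  · rw [h.1, h.2, Pi.star_apply]
  · rw [mul_zero, zero_mul]

variable [Algebra ℝ D] [StarModule ℝ D]

variable (D) in
/-- The primitive diagonal idempotent `Eᵢ` of the Jordan algebra of Hermitian matrices. -/
def diagonalIdempotent (i : n) : Herm (Matrix n n D) :=
  ⟨single i i 1, by
    change star _ = _
    rw [star_eq_conjTranspose, conjTranspose_single, star_one]⟩

/-- The Hermitian matrix with `q` at `(i, j)` and `star q` at `(j, i)`, both contributions being
added when `i = j`. -/
def hermitianSingle (i j : n) : D →ₗ[ℝ] Herm (Matrix n n D) where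
  toFun q := ⟨single i j q + single j i (star q), by
    change star _ = _
    rw [star_eq_conjTranspose, conjTranspose_add, conjTranspose_single, conjTranspose_single,
      star_star, add_comm]⟩
  map_add' p q := Subtype.ext <| by
    change single i j (p + q) + single j i (star (p + q)) =
      single i j p + single j i (star p) + (single i j q + single j i (star q))
    rw [star_add, single_add, single_add, add_add_add_comm]
  map_smul' r q := Subtype.ext <| by
    change single i j (r • q) + single j i (star (r • q)) =
      r • (single i j q + single j i (star q))
    rw [star_smul, star_trivial, ← smul_single, ← smul_single, smul_add]

lemma coe_diagonalIdempotent (i : n) : (diagonalIdempotent D i : Matrix n n D) = single i i 1 :=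
  rfl

lemma coe_hermitianSingle (i j : n) (q : D) :
    (hermitianSingle i j q : Matrix n n D) = single i j q + single j i (star q) :=
  rfl

lemma hermitianSingle_star (i j : n) (q : D) :
    hermitianSingle i j (star q) = hermitianSingle j i q :=
  Subtype.ext <| by rw [coe_hermitianSingle, coe_hermitianSingle, star_star, add_comm]

lemma isIdempotentElem_diagonalIdempotent (i : n) :
    IsIdempotentElem (diagonalIdempotent D i : Matrix n n D) := by
  simp [IsIdempotentElem, coe_diagonalIdempotent]

lemma diagonalIdempotent_mul_of_ne {i j : n} (hij : i ≠ j) :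
    (diagonalIdempotent D i : Matrix n n D) * diagonalIdempotent D j = 0 :=
  single_mul_single_of_ne _ _ _ _ hij _

lemma diagonalIdempotent_ne_zero [Nontrivial D] (i : n) : diagonalIdempotent D i ≠ 0 := fun h =>
  one_ne_zero (α := D) <| by
    simpa [coe_diagonalIdempotent] using congrFun₂ (congrArg Subtype.val h) i i

lemma hermitianSingle_apply_same {i j : n} (hij : i ≠ j) (q : D) :
    (hermitianSingle i j q : Matrix n n D) i j = q := by
  simp [coe_hermitianSingle, hij.symm]

lemma hermitianSingle_injective {i j : n} (hij : i ≠ j) :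
    Function.Injective (hermitianSingle i j : D → Herm (Matrix n n D)) := fun p q h => by
  rw [← hermitianSingle_apply_same hij p, h, hermitianSingle_apply_same hij]

lemma star_apply_of_herm (X : Herm (Matrix n n D)) (i j : n) :
    star ((X : Matrix n n D) i j) = (X : Matrix n n D) j i := by
  have hX : star (X : Matrix n n D) = X := X.2
  exact congrFun₂ hX j i

lemma diagonalIdempotent_anticommutator_hermitianSingle {i j : n} (hij : i ≠ j) (q : D) :
    (diagonalIdempotent D i : Matrix n n D) * hermitianSingle i j q
      + hermitianSingle i j q * diagonalIdempotent D i = hermitianSingle i j q := by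
  simp [coe_diagonalIdempotent, coe_hermitianSingle, mul_add, add_mul, hij, hij.symm]

lemma hermitianSingle_anticommutator {i j k : n} (hij : i ≠ j) (hjk : j ≠ k) (hik : i ≠ k)
    (p q : D) :
    (hermitianSingle i j p : Matrix n n D) * hermitianSingle j k q
      + hermitianSingle j k q * hermitianSingle i j p = hermitianSingle i k (p * q) := by
  simp [coe_hermitianSingle, mul_add, add_mul, hij, hij.symm, hjk.symm, hjk, hik, hik.symm]

lemma hermitianSingle_mul_self {i j : n} (hij : i ≠ j) (q : D) :
    (hermitianSingle i j q : Matrix n n D) * hermitianSingle i j q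
      = single i i (q * star q) + single j j (star q * q) := by
  simp [coe_hermitianSingle, mul_add, add_mul, hij, hij.symm, add_comm]

lemma apply_eq_zero_of_diagonalIdempotent_anticommutator {i : n} {M : Matrix n n D}
    (hM : diagonalIdempotent D i * M + M * diagonalIdempotent D i = M) {k l : n}
    (hkl : k = i ↔ l = i) : M k l = 0 := by
  have hentry := congrFun₂ hM k l
  rw [coe_diagonalIdempotent, Matrix.add_apply] at hentry
  by_cases hk : k = i
  · obtain rfl := hkl.1 hk
    subst hk
    simpa using hentry
  · rw [single_mul_apply_of_ne _ _ _ _ _ hk, mul_single_apply_of_ne _ _ _ _ _ (mt hkl.2 hk),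
      add_zero] at hentry
    exact hentry.symm

lemma eq_hermitianSingle_of_diagonalIdempotent_anticommutator {i j : n} (hij : i ≠ j)
    {X : Herm (Matrix n n D)}
    (hi : (diagonalIdempotent D i : Matrix n n D) * X + X * diagonalIdempotent D i = X)
    (hj : (diagonalIdempotent D j : Matrix n n D) * X + X * diagonalIdempotent D j = X) :
    X = hermitianSingle i j ((X : Matrix n n D) i j) := by
  refine Subtype.ext (Matrix.ext fun k l => ?_)
  rw [coe_hermitianSingle, star_apply_of_herm, Matrix.add_apply, single_apply, single_apply]
  split_ifs with hkl hlk hlk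
  · exact absurd (hkl.1.trans hlk.1.symm) hij
  · rw [← hkl.1, ← hkl.2, add_zero]
  · rw [← hlk.1, ← hlk.2, zero_add]
  · rw [add_zero]
    by_cases hki : k = i ↔ l = i
    · exact apply_eq_zero_of_diagonalIdempotent_anticommutator hi hki
    · exact apply_eq_zero_of_diagonalIdempotent_anticommutator hj (by grind)

lemma commute_of_forall_herm [Nontrivial n] {M : Matrix n n D}
    (hM : ∀ X : Herm (Matrix n n D), Commute M X) (X : Matrix n n D) : Commute M X := by
  have hoff {i j : n} (hij : i ≠ j) (q : D) : Commute M (single i j q) := by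
    simpa [coe_diagonalIdempotent, coe_hermitianSingle, mul_add, hij]
      using (hM (diagonalIdempotent D i)).mul_right (hM (hermitianSingle i j q))
  have hsingle (i j : n) (q : D) : Commute M (single i j q) := by
    rcases eq_or_ne i j with rfl | hij
    · obtain ⟨k, hk⟩ := exists_ne i
      simpa using (hoff hk.symm q).mul_right (hoff hk 1)
    · exact hoff hij q
  rw [matrix_eq_sum_single X]
  exact Commute.sum_right _ _ _ fun i _ => Commute.sum_right _ _ _ fun j _ => hsingle i j _

lemma two_smul_eq_sum_hermitianSingle (X : Herm (Matrix n n D)) :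
    (2 : ℝ) • X = ∑ i, ∑ j, hermitianSingle i j ((X : Matrix n n D) i j) := by
  have hX : ∑ i, ∑ j, single i j ((X : Matrix n n D) i j) = X := (matrix_eq_sum_single _).symm
  have hX' : ∑ i, ∑ j, single j i (star ((X : Matrix n n D) i j)) = X := by
    simp only [star_apply_of_herm]
    rw [Finset.sum_comm, hX]
  refine Subtype.ext ?_
  simp only [Submodule.coe_sum, coe_hermitianSingle, Finset.sum_add_distrib, hX, hX']
  exact two_smul ℝ _

lemma unitaryConj_diagonalUnitary_diagonalIdempotent (d : n → unitary D) (i : n) :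
    (unitaryConj (diagonalUnitary d) : Herm (Matrix n n D) ≃ₗ[ℝ] Herm (Matrix n n D))
      (diagonalIdempotent D i) = diagonalIdempotent D i :=
  Subtype.ext <| by
    rw [unitaryConj_apply, coe_diagonalIdempotent, diagonalUnitary_mul_single_mul_star, mul_one,
      (Unitary.mem_iff.1 (d i).2).2]

lemma unitaryConj_diagonalUnitary_hermitianSingle (d : n → unitary D) (i j : n) (q : D) :
    (unitaryConj (diagonalUnitary d) : Herm (Matrix n n D) ≃ₗ[ℝ] Herm (Matrix n n D))
      (hermitianSingle i j q) = hermitianSingle i j ((d i : D) * q * star (d j : D)) :=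
  Subtype.ext <| by
    rw [unitaryConj_apply, coe_hermitianSingle, coe_hermitianSingle, mul_add, add_mul,
      diagonalUnitary_mul_single_mul_star, diagonalUnitary_mul_single_mul_star, star_mul, star_mul,
      star_star, mul_assoc _ (star q)]

/-- The map `f` for which `β` sends the Hermitian matrix supported on `(i, j)` and `(j, i)` with
entry `q` to one with entry `f q`, provided that `β` fixes the diagonal idempotents. -/
def peirceMap (β : Herm (Matrix n n D) ≃ₗ[ℝ] Herm (Matrix n n D)) (i j : n) : D →ₗ[ℝ] D :=
  entryLinearMap ℝ D i j ∘ₗ Submodule.subtype _ ∘ₗ β.toLinearMap ∘ₗ hermitianSingle i j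

section PeirceMap

variable {β : Herm (Matrix n n D) ≃ₗ[ℝ] Herm (Matrix n n D)} (hβ : β ∈ jordanAut (Matrix n n D))
  (hfix : ∀ i, β (diagonalIdempotent D i) = diagonalIdempotent D i)
include hβ hfix

lemma map_hermitianSingle {i j : n} (hij : i ≠ j) (q : D) :
    β (hermitianSingle i j q) = hermitianSingle i j (peirceMap β i j q) := by
  refine eq_hermitianSingle_of_diagonalIdempotent_anticommutator hij ?_ ?_
  · have hi := jordanAut.map_anticommutator hβ
      (diagonalIdempotent_anticommutator_hermitianSingle hij q)
    rwa [hfix] at hi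
  · have hj := jordanAut.map_anticommutator hβ
      (diagonalIdempotent_anticommutator_hermitianSingle hij.symm (star q))
    rwa [hfix, hermitianSingle_star] at hj

lemma peirceMap_mul {i j k : n} (hij : i ≠ j) (hjk : j ≠ k) (hik : i ≠ k) (p q : D) :
    peirceMap β i k (p * q) = peirceMap β i j p * peirceMap β j k q := by
  have hmap := jordanAut.map_anticommutator hβ (hermitianSingle_anticommutator hij hjk hik p q)
  rw [map_hermitianSingle hβ hfix hij, map_hermitianSingle hβ hfix hjk,
    map_hermitianSingle hβ hfix hik, hermitianSingle_anticommutator hij hjk hik] at hmap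
  exact (hermitianSingle_injective hik (Subtype.ext hmap)).symm

lemma peirceMap_one_mem_unitary {i j : n} (hij : i ≠ j) : peirceMap β i j 1 ∈ unitary D := by
  set u := peirceMap β i j 1
  have hsq : (hermitianSingle i j u : Matrix n n D) * hermitianSingle i j u
      = (single i i 1 + single j j 1 : Matrix n n D) := by
    rw [← map_hermitianSingle hβ hfix hij, jordanAut.map_mul_self hβ
      (z := diagonalIdempotent D i + diagonalIdempotent D j), map_add, hfix, hfix]
    · rfl
    · rw [hermitianSingle_mul_self hij, star_one, one_mul]
      rfl
  rw [hermitianSingle_mul_self hij] at hsq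
  refine Unitary.mem_iff.2 ⟨?_, ?_⟩
  · simpa [hij] using congrFun₂ hsq j j
  · simpa [hij.symm] using congrFun₂ hsq i i

end PeirceMap

end HermitianMatrices

/-! ### Coordinatization -/

section Coordinatization

variable {n R D : Type*} [CommRing R] [Ring D] [StarMul D] [Algebra R D] {f : n → n → D →ₗ[R] D}
  (hmul : ∀ i j k, i ≠ j → j ≠ k → i ≠ k → ∀ p q, f i k (p * q) = f i j p * f j k q)
  (hone : ∀ i j, i ≠ j → f i j 1 ∈ unitary D)
include hmul hone

lemma exists_algHom_row_eq {o b c : n} (hob : o ≠ b) (hoc : o ≠ c) (hbc : b ≠ c) :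
    ∃ g : D →ₐ[R] D, ∀ j, o ≠ j → ∀ q, f o j q = g q * f o j 1 := by
  have hu : star (f o b 1) * f o b 1 = 1 := (Unitary.mem_iff.1 (hone o b hob)).1
  have hu' : f o b 1 * star (f o b 1) = 1 := (Unitary.mem_iff.1 (hone o b hob)).2
  let g : D →ₗ[R] D := LinearMap.mulRight R (star (f o b 1)) ∘ₗ f o b
  have hrow (j : n) (hoj : o ≠ j) (q : D) : f o j q = g q * f o j 1 := by
    change _ = f o b q * star (f o b 1) * f o j 1
    rcases eq_or_ne b j with rfl | hbj
    · rw [mul_assoc, hu, mul_one]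
    · have hj (q : D) : f o j q = f o b q * f b j 1 := by rw [← hmul o b j hob hbj hoj, mul_one]
      rw [hj 1, mul_assoc, ← mul_assoc _ (f o b 1), hu, one_mul, ← hj]
  have hg_mul (p q : D) : g (p * q) = g p * g q := by
    have hfactor (p q : D) : f o b (p * q) = f o c p * f c b q := hmul o c b hoc hbc.symm hob p q
    have hcol : f o b (p * q) = g p * f o b q := by
      rw [hfactor, hrow c hoc, mul_assoc, ← hfactor 1, one_mul]
    change f o b (p * q) * star (f o b 1) = g p * (f o b q * star (f o b 1))
    rw [hcol, mul_assoc]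
  exact ⟨AlgHom.ofLinearMap g hu' hg_mul, hrow⟩

lemma exists_algHom_eq_star_mul_mul [Fintype n] (hn : 2 < Fintype.card n) :
    ∃ (g : D →ₐ[R] D) (u : n → unitary D), ∀ i j, i ≠ j → ∀ q,
      f i j q = star (u i : D) * g q * u j := by
  classical
  obtain ⟨o, b, c, hob, hoc, hbc⟩ := Fintype.two_lt_card_iff.1 hn
  obtain ⟨g, hg⟩ := exists_algHom_row_eq hmul hone hob hoc hbc
  let u (i : n) : unitary D := if h : o = i then 1 else ⟨f o i 1, hone o i h⟩
  have huo : (u o : D) = 1 := by simp [u]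
  have hrow (j : n) (hoj : o ≠ j) (q : D) : f o j q = g q * u j := by
    rw [hg j hoj]
    simp [u, hoj]
  have hu (i : n) : (u i : D) * star (u i : D) = 1 := Unitary.coe_mul_star_self _
  have hu' (i : n) : star (u i : D) * u i = 1 := Unitary.coe_star_mul_self _
  have hoff (i j : n) (hij : i ≠ j) (hoi : o ≠ i) (hoj : o ≠ j) (q : D) :
      f i j q = star (u i : D) * g q * u j := by
    have hui : (u i : D) * f i j q = g q * u j := by
      rw [← hrow j hoj, ← one_mul (u i : D), ← map_one g, ← hrow i hoi, ← hmul o i j hoi hij hoj,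
        one_mul]
    rw [mul_assoc, ← hui, ← mul_assoc, hu', one_mul]
  refine ⟨g, u, fun i j hij q => ?_⟩
  rcases eq_or_ne o i with rfl | hoi
  · rw [huo, star_one, one_mul, hrow j hij]
  rcases eq_or_ne o j with rfl | hoj
  · obtain ⟨k, hok, hki⟩ : ∃ k, o ≠ k ∧ i ≠ k := by
      rcases eq_or_ne i b with rfl | hib
      exacts [⟨c, hoc, hbc⟩, ⟨b, hob, hib⟩]
    have hk : f i k q = f i o q * u k := by
      rw [← one_mul (u k : D), ← map_one g, ← hrow k hok, ← hmul i o k hij hok hki, mul_one]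
    rw [huo, mul_one, ← mul_one (f i o q), ← hu k, ← mul_assoc, ← hk, hoff i k hki hoi hok,
      mul_assoc, hu, mul_one]
  · exact hoff i j hij hoi hoj q

end Coordinatization

/-! ### Quaternionic Hermitian matrices -/

section QuaternionicMatrices

variable {n : Type*} [Fintype n]

lemma exists_unit_mulVec_eq_self {P : Matrix n n HR} (hP : IsIdempotentElem P) (hne : P ≠ 0) :
    ∃ v : n → HR, star v ⬝ᵥ v = 1 ∧ P *ᵥ v = v := by
  obtain ⟨l, hl⟩ : ∃ l, P.col l ≠ 0 := by
    by_contra! hcol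
    exact hne (Matrix.ext fun k l => congrFun (hcol l) k)
  obtain ⟨r, hr⟩ := exists_smul_star_dotProduct_self_eq_one hl
  have hfix : P *ᵥ P.col l = P.col l := funext fun k => congrFun₂ hP k l
  exact ⟨r • P.col l, hr, by rw [mulVec_smul, hfix]⟩

variable [DecidableEq n]

lemma exists_unitary_conj_single {P : n → Matrix n n HR} (hP : OrthogonalIdempotents P)
    (hsa : ∀ i, IsSelfAdjoint (P i)) (hne : ∀ i, P i ≠ 0) :
    ∃ U : unitary (Matrix n n HR), ∀ i,
      P i = (U : Matrix n n HR) * single i i 1 * star (U : Matrix n n HR) := by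
  choose v hv hPv using fun i => exists_unit_mulVec_eq_self (hP.idem i) (hne i)
  have horth {i j : n} (hij : i ≠ j) : star (v i) ⬝ᵥ v j = 0 := by
    have hPi : (P i)ᴴ = P i := hsa i
    rw [← hPv i, ← hPv j, star_mulVec, hPi, ← dotProduct_mulVec, mulVec_mulVec, hP.ortho hij,
      zero_mulVec, dotProduct_zero]
  let U : Matrix n n HR := .of fun k i => v i k
  have hU : star U * U = 1 := by
    ext1 i j
    change star (v i) ⬝ᵥ v j = _
    rcases eq_or_ne i j with rfl | hij
    · rw [hv, one_apply_eq]
    · rw [horth hij, one_apply_ne hij]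
  have hU' : U * star U = 1 := mul_eq_one_comm.1 hU
  have hPU (i : n) : P i * U = U * single i i 1 := by
    ext1 k j
    change (P i *ᵥ v j) k = _
    rcases eq_or_ne i j with rfl | hij
    · simp [hPv, U]
    · rw [← hPv j, mulVec_mulVec, hP.ortho hij]
      simp [hij.symm]
  exact ⟨⟨U, Unitary.mem_iff.2 ⟨hU, hU'⟩⟩, fun i => by
    rw [← hPU, mul_assoc, hU', mul_one]⟩

lemma linearMap_ext_herm {M : Type*} [AddCommGroup M] [Module ℝ M]
    {S T : Herm (Matrix n n HR) →ₗ[ℝ] M}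
    (hdiag : ∀ i, S (diagonalIdempotent HR i) = T (diagonalIdempotent HR i))
    (hoff : ∀ i j, i ≠ j → ∀ q, S (hermitianSingle i j q) = T (hermitianSingle i j q)) :
    S = T := by
  have hsingle (i j : n) (q : HR) : S (hermitianSingle i j q) = T (hermitianSingle i j q) := by
    rcases eq_or_ne i j with rfl | hij
    · have hreal : hermitianSingle i i q = (2 * q.re) • diagonalIdempotent HR i :=
        Subtype.ext <| by
          change single i i q + single i i (star q) = (2 * q.re) • single i i (1 : HR)
          rw [← single_add, Quaternion.self_add_star', smul_single, Algebra.smul_def, mul_one]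
          rfl
      rw [hreal, map_smul, map_smul, hdiag]
    · exact hoff i j hij q
  refine LinearMap.ext fun X => smul_right_injective M (two_ne_zero : (2 : ℝ) ≠ 0) ?_
  simp only [← map_smul, two_smul_eq_sum_hermitianSingle, map_sum, hsingle]

lemma exists_unitaryConj_diagonalIdempotent_eq
    {α : Herm (Matrix n n HR) ≃ₗ[ℝ] Herm (Matrix n n HR)} (hα : α ∈ jordanAut (Matrix n n HR)) :
    ∃ U : unitary (Matrix n n HR), ∀ i,
      (unitaryConj U : Herm (Matrix n n HR) ≃ₗ[ℝ] Herm (Matrix n n HR)) (diagonalIdempotent HR i)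
        = α (diagonalIdempotent HR i) := by
  have hE := isIdempotentElem_diagonalIdempotent (n := n) (D := HR)
  have hP : OrthogonalIdempotents fun i => (α (diagonalIdempotent HR i) : Matrix n n HR) :=
    ⟨fun i => jordanAut.isIdempotentElem_map hα (hE i), fun i j hij =>
      jordanAut.map_mul_map_eq_zero hα (hE i)
      (diagonalIdempotent_mul_of_ne hij) (diagonalIdempotent_mul_of_ne hij.symm)⟩
  obtain ⟨U, hU⟩ := exists_unitary_conj_single hP
    (fun i => (α (diagonalIdempotent HR i)).2)
    (fun i h => diagonalIdempotent_ne_zero i (α.map_eq_zero_iff.1 (Subtype.ext h)))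
  exact ⟨U, fun i => Subtype.ext (hU i).symm⟩

lemma exists_unitaryConj_eq_of_diagonalIdempotent_fixed (hn : 2 < Fintype.card n)
    {β : Herm (Matrix n n HR) ≃ₗ[ℝ] Herm (Matrix n n HR)} (hβ : β ∈ jordanAut (Matrix n n HR))
    (hfix : ∀ i, β (diagonalIdempotent HR i) = diagonalIdempotent HR i) :
    ∃ U : unitary (Matrix n n HR),
      (unitaryConj U : Herm (Matrix n n HR) ≃ₗ[ℝ] Herm (Matrix n n HR)) = β := by
  obtain ⟨g, u, hgu⟩ := exists_algHom_eq_star_mul_mul (f := peirceMap β)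
    (fun i j k hij hjk hik => peirceMap_mul hβ hfix hij hjk hik)
    (fun i j hij => peirceMap_one_mem_unitary hβ hfix hij) hn
  obtain ⟨a, ha⟩ := exists_unitary_conj_eq_of_algHom g
  refine ⟨diagonalUnitary fun i => star (u i) * a, LinearEquiv.toLinearMap_injective ?_⟩
  refine linearMap_ext_herm (fun i => ?_) (fun i j hij q => ?_)
  · exact (unitaryConj_diagonalUnitary_diagonalIdempotent _ i).trans (hfix i).symm
  · refine (unitaryConj_diagonalUnitary_hermitianSingle _ i j q).trans ?_
    refine Eq.trans ?_ (map_hermitianSingle hβ hfix hij q).symm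
    rw [hgu i j hij, ha]
    simp [mul_assoc]

theorem unitaryConj_surjective (hn : 2 < Fintype.card n) :
    Function.Surjective (unitaryConj : unitary (Matrix n n HR) →* jordanAut (Matrix n n HR)) := by
  intro α
  obtain ⟨U, hU⟩ := exists_unitaryConj_diagonalIdempotent_eq α.2
  have hfix (i : n) :
      (((unitaryConj U)⁻¹ * α : jordanAut (Matrix n n HR)) :
        Herm (Matrix n n HR) ≃ₗ[ℝ] Herm (Matrix n n HR)) (diagonalIdempotent HR i)
        = diagonalIdempotent HR i :=
    (LinearEquiv.symm_apply_eq _).2 (hU i).symm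
  obtain ⟨V, hV⟩ := exists_unitaryConj_eq_of_diagonalIdempotent_fixed hn
    ((unitaryConj U)⁻¹ * α).2 hfix
  refine ⟨U * V, ?_⟩
  rw [map_mul, Subtype.ext hV, mul_inv_cancel_left]

lemma mem_ker_unitaryConj_quaternion_iff [Nontrivial n] {U : unitary (Matrix n n HR)} :
    U ∈ (unitaryConj (A := Matrix n n HR)).ker ↔
      (U : Matrix n n HR) = 1 ∨ (U : Matrix n n HR) = -1 := by
  refine mem_ker_unitaryConj_iff.trans ⟨fun h => ?_, ?_⟩
  · exact eq_one_or_eq_neg_one_of_mem_center (commute_of_forall_herm h)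
  · rintro (h | h) X <;> rw [h]
    exacts [.one_left _, (Commute.one_left _).neg_left]

end QuaternionicMatrices

theorem statement3_general {n : Type*} [Fintype n] [DecidableEq n] (hn : 2 < Fintype.card n) :
    ∃ φ : unitary (Matrix n n HR) →* jordanAut (Matrix n n HR),
      (∀ (A : unitary (Matrix n n HR)) (X : Herm (Matrix n n HR)),
        ((φ A : Herm (Matrix n n HR) ≃ₗ[ℝ] Herm (Matrix n n HR)) X).1 = A.1 * X.1 * star A.1) ∧
      Function.Surjective φ ∧
      (∀ A : unitary (Matrix n n HR), A ∈ φ.ker ↔ (A.1 = 1 ∨ A.1 = -1)) ∧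
      Nonempty (jordanAut (Matrix n n HR) ≃* unitary (Matrix n n HR) ⧸ φ.ker) := by
  have : Nontrivial n := Fintype.one_lt_card_iff_nontrivial.1 (one_lt_two.trans hn)
  have hsurj := unitaryConj_surjective hn
  exact ⟨unitaryConj, unitaryConj_apply, hsurj, fun _ => mem_ker_unitaryConj_quaternion_iff,
    ⟨(QuotientGroup.quotientKerEquivOfSurjective unitaryConj hsurj).symm⟩⟩

theorem statement3 :
    ∃ φ : unitary (Matrix (Fin 3) (Fin 3) HR) →* F4H,
      (∀ (A : unitary (Matrix (Fin 3) (Fin 3) HR)) (X : JH),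
        ((φ A : JH ≃ₗ[ℝ] JH) X).1 = A.1 * X.1 * star A.1) ∧
      Function.Surjective φ ∧
      (∀ A : unitary (Matrix (Fin 3) (Fin 3) HR),
        A ∈ φ.ker ↔ (A.1 = 1 ∨ A.1 = -1)) ∧
      Nonempty (F4H ≃* unitary (Matrix (Fin 3) (Fin 3) HR) ⧸ φ.ker) := by
  -- `JH` and `F4H` are definitionally `Herm` and `jordanAut` of the `3 × 3` matrices.
  exact statement3_general (by simp)
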